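/- Let n ≥ 3 be an odd natural number. The number of functions σ : (ZMod n) × Bool → ZMod 3, with all values in {1, 2} ⊆ ZMod 3, satisfying σ(i,false) + σ(i,true) + σ(i+1,true) + σ(i+1,false) = 0 for every i ∈ ZMod n, together with Σ_{i} σ(i,false) = 0 and Σ_{i} σ(i,true) = 0, equals (2^n − 2)/3. -/

import Mathlib

def hwG (b : Bool) : ZMod 3 := if b then 1 else 2

def hwN (n : ℕ) (c : ZMod 3) : ℤ := ∑ f : Fin n → Bool, if ∑ i, hwG (f i) = c then 1 else 0

lemma hwN_succ (n : ℕ) (c : ZMod 3) : hwN (n+1) c = hwN n (c - 1) + hwN n (c - 2) := by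
  unfold hwN
  rw [← (Fin.consEquiv (fun _ : Fin (n+1) => Bool)).sum_comp, Fintype.sum_prod_type]
  simp only [Fin.consEquiv, Equiv.coe_fn_mk, Fin.sum_univ_succ, Fin.cons_zero, Fin.cons_succ,
    Fintype.sum_bool]
  simp only [hwG, eq_sub_iff_add_eq']
  simp

lemma hwN_eq (n : ℕ) : 3 * hwN n 0 = 2 ^ n + 2 * (-1) ^ n ∧ 3 * hwN n 1 = 2 ^ n - (-1) ^ n ∧
    3 * hwN n 2 = 2 ^ n - (-1) ^ n := by
  induction n with
  | zero => simp [hwN]; decide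
  | succ n ih =>
    obtain ⟨h0, h1, h2⟩ := ih
    rw [hwN_succ, hwN_succ, hwN_succ]
    rw [show (0 - 1 : ZMod 3) = 2 by decide, show (0 - 2 : ZMod 3) = 1 by decide,
      show (1 - 1 : ZMod 3) = 0 by decide, show (1 - 2 : ZMod 3) = 2 by decide,
      show (2 - 1 : ZMod 3) = 1 by decide, show (2 - 2 : ZMod 3) = 0 by decide]
    simp only [pow_succ]
    refine ⟨?_, ?_, ?_⟩ <;> linarith

lemma hw_anti (n : ℕ) (hpar : Odd n) (s : ZMod n → ZMod 3) (h : ∀ i, s (i + 1) = - s i)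
    (i : ZMod n) : s i = 0 := by
  have key : ∀ k : ℕ, s (i + k) = (-1) ^ k * s i := by
    intro k
    induction k with
    | zero => simp
    | succ k ih => rw [Nat.cast_succ, ← add_assoc, h, ih, pow_succ]; ring
  have := key n
  rw [hpar.neg_one_pow] at this
  simp at this
  revert this
  generalize s i = x
  revert x
  decide

lemma hw_cases : ∀ b, hwG b = 1 ∨ hwG b = 2 := by decide

lemma hwG_dec : ∀ x : ZMod 3, (x = 1 ∨ x = 2) → hwG (decide (x = 1)) = x := by decide

lemma hwG_dec' : ∀ b, decide (hwG b = 1) = b := by decide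

def hwEquiv (n : ℕ) [NeZero n] (hpar : Odd n) : {σ : ZMod n × Bool → ZMod 3 //
      (∀ v, σ v = 1 ∨ σ v = 2) ∧
      (∀ i : ZMod n,
        σ (i, false) + σ (i, true) + σ (i + 1, true) + σ (i + 1, false) = 0) ∧
      (∑ i : ZMod n, σ (i, false)) = 0 ∧ (∑ i : ZMod n, σ (i, true)) = 0} ≃
    {f : ZMod n → Bool // ∑ i, hwG (f i) = 0} where
  toFun σ := ⟨fun i => decide (σ.1 (i, false) = 1), by
    simp only [hwG_dec _ (σ.2.1 _)]
    exact σ.2.2.2.1⟩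
  invFun f := ⟨fun v => if v.2 then - hwG (f.1 v.1) else hwG (f.1 v.1), by
    refine ⟨?_, ?_, ?_, ?_⟩
    · rintro ⟨i, b⟩
      generalize hx : f.1 i = x
      simp only [hx]
      clear hx
      revert b x
      decide
    · intro i
      simp
    · simpa using f.2
    · simpa using f.2⟩
  left_inv σ := by
    have hs := hw_anti n hpar (fun i => σ.1 (i, false) + σ.1 (i, true)) (by
      intro i
      have := σ.2.2.1 i
      linear_combination this)
    ext ⟨i, b⟩
    simp only [hwG_dec _ (σ.2.1 _)]
    cases b
    · simp
    · have := hs i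
      simp only [if_true]
      linear_combination -this
  right_inv f := by
    ext i
    simp [hwG_dec']


/-- For odd `n ≥ 3`, the number of Heawood vectors of the circular ladder graph `CL_n`,
i.e. functions `σ : (ZMod n) × Bool → ZMod 3` with all values in `{1, 2}` satisfying the
propriety condition for each quadrilateral face and for the two `n`-gonal faces,
equals `(2 ^ n - 2) / 3`. -/
theorem card_heawood_circularLadder_odd (n : ℕ) [NeZero n] (hn : 3 ≤ n) (hpar : Odd n) :
    Nat.card {σ : ZMod n × Bool → ZMod 3 //
      (∀ v, σ v = 1 ∨ σ v = 2) ∧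
      (∀ i : ZMod n,
        σ (i, false) + σ (i, true) + σ (i + 1, true) + σ (i + 1, false) = 0) ∧
      (∑ i : ZMod n, σ (i, false)) = 0 ∧ (∑ i : ZMod n, σ (i, true)) = 0} =
    (2 ^ n - 2) / 3 := by
  rw [Nat.card_congr (hwEquiv n hpar)]
  obtain ⟨k, rfl⟩ : ∃ k, n = k + 1 := ⟨n - 1, by omega⟩
  have h1 : (Nat.card {f : ZMod (k+1) → Bool // ∑ i, hwG (f i) = 0} : ℤ) = hwN (k+1) 0 := by
    have : Nat.card {f : Fin (k+1) → Bool // ∑ i, hwG (f i) = 0} =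
      Nat.card {f : ZMod (k+1) → Bool // ∑ i, hwG (f i) = 0} := by
      rfl
    rw [← this, Nat.card_eq_fintype_card, Fintype.card_subtype, hwN, Finset.sum_boole]
  have h2 := (hwN_eq (k+1)).1
  rw [← h1, hpar.neg_one_pow] at h2
  have h3 : (((2 ^ (k+1) : ℕ)) : ℤ) = 2 ^ (k+1) := by push_cast; rfl
  rw [← h3] at h2
  omega
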